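/- Let K be a number field and let R be a sieve in residue form for K. Assume there is a finite subset T ⊆ 𝓞_K such that for every nonzero prime ideal 𝔭 and every x ∈ 𝓞_K with x ∈ R_𝔭 there exists t ∈ T with x − t ∈ 𝔭², and assume that for every 𝔭 the set R_𝔭 does not contain all residue classes of 𝓞_K/𝔭^{k(𝔭)}. Then for every finite set Ω of nonzero prime ideals of 𝓞_K, every integer m ≥ 0, and every family (x_𝔭)_{𝔭∈Ω} of elements of 𝓞_K with x_𝔭 ∉ R_𝔭 for all 𝔭 ∈ Ω, there exists y ∈ V(K,R) with y ≡ x_𝔭 (mod 𝔭^m) for all 𝔭 ∈ Ω. -/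

import Mathlib

open NumberField

/-- A sieve in residue form for a number field `K`: for every (prime) ideal `P` of
`𝓞 K`, an exponent `k P ≥ 1` and a set `R P` of residue classes in `𝓞 K ⧸ P ^ k P`. -/
structure ResidueSieve (K : Type*) [Field K] [NumberField K] where
  k : Ideal (𝓞 K) → ℕ
  k_pos : ∀ P : Ideal (𝓞 K), 1 ≤ k P
  R : (P : Ideal (𝓞 K)) → Set (𝓞 K ⧸ P ^ k P)

/-- `x ∈ R_𝔭`: the residue class of `x` modulo `𝔭^{k(𝔭)}` belongs to `R 𝔭`. -/
def ResidueSieve.Mem {K : Type*} [Field K] [NumberField K] (S : ResidueSieve K)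
    (P : Ideal (𝓞 K)) (x : 𝓞 K) : Prop :=
  Ideal.Quotient.mk (P ^ S.k P) x ∈ S.R P

/-- `V(K,R)`: the set of integers of `K` avoiding the sieve at every nonzero prime. -/
def ResidueSieve.V {K : Type*} [Field K] [NumberField K] (S : ResidueSieve K) :
    Set (𝓞 K) :=
  {x | ∀ P : Ideal (𝓞 K), P.IsPrime → P ≠ ⊥ → ¬ S.Mem P x}
section Helpers
open Filter Topology

theorem sieveAux_summable (K : Type*) [Field K] [NumberField K] :
    Summable (fun I : Ideal (𝓞 K) => 1 / ((Ideal.absNorm I : ℝ)) ^ 2) := by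
  classical
  let a : ℕ → ℝ := fun n => (Nat.card {I : Ideal (𝓞 K) // Ideal.absNorm I = n} : ℝ)
  have hs : LSeriesSummable (fun n => ((a n : ℝ) : ℂ)) 2 := by
    refine LSeriesSummable_of_sum_norm_bigO_and_nonneg (r := 1) ?_ (fun _ => Nat.cast_nonneg _)
      zero_le_one (by norm_num)
    refine Asymptotics.isBigO_atTop_natCast_rpow_of_tendsto_div_rpow (𝕜 := ℝ) (a := NumberField.dedekindZeta_residue K) ?_
    simp only [Real.rpow_one]
    refine ((NumberField.Ideal.tendsto_norm_le_div_atTop₀ K).comp tendsto_natCast_atTop_atTop).congr fun n ↦ ?_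
    simp only [Function.comp_apply, Nat.cast_le, a, ← Nat.cast_sum]
    congr
    rw [← add_left_inj 1, ← Ideal.card_norm_le_eq_card_norm_le_add_one,
      show Finset.Icc 1 n = Finset.Ioc 0 n from Finset.Icc_succ_left_eq_Ioc _ _,
      show 1 = Nat.card {I : Ideal (𝓞 K) // Ideal.absNorm I = 0} by simp [Ideal.absNorm_eq_zero_iff],
      Finset.sum_Ioc_add_eq_sum_Icc (n.zero_le),
      ← Finset.card_preimage_eq_sum_card_image_eq (fun k _ ↦ Ideal.finite_setOfPred_absNorm_eq k)]
    simp [Set.coe_eq_subtype]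
  have hs2 : Summable (fun n : ℕ => a n * (1 / (n : ℝ) ^ 2)) := by
    have := hs.norm
    refine this.congr fun n => ?_
    rw [LSeries.norm_term_eq]
    rcases eq_or_ne n 0 with rfl | hn
    · simp
    · simp [hn, a, div_eq_mul_inv]
  refine summable_of_sum_le (c := ∑' n : ℕ, a n * (1 / (n : ℝ) ^ 2)) (fun I => by positivity) ?_
  intro u
  have hmap : ∀ I ∈ u, Ideal.absNorm I ∈ u.image Ideal.absNorm := fun I hI => Finset.mem_image_of_mem _ hI
  rw [← Finset.sum_fiberwise_of_maps_to hmap]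
  refine le_trans (Finset.sum_le_sum fun n hn => ?_)
    (hs2.sum_le_tsum (u.image Ideal.absNorm) (fun n _ => by positivity))
  rw [Finset.sum_congr rfl (g := fun _ => 1 / (n : ℝ) ^ 2)
    (fun I hI => by rw [(Finset.mem_filter.mp hI).2]), Finset.sum_const, nsmul_eq_mul]
  refine mul_le_mul_of_nonneg_right ?_ (by positivity)
  have hfin := Ideal.finite_setOfPred_absNorm_eq (S := 𝓞 K) n
  simp only [a]
  have : Nat.card {I : Ideal (𝓞 K) // Ideal.absNorm I = n} = hfin.toFinset.card := by
    rw [← Set.ncard_eq_toFinset_card _ hfin]; rfl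
  rw [this]
  exact_mod_cast Finset.card_le_card (fun I hI => by simpa using (Finset.mem_filter.mp hI).2)

theorem sieveAux_norm {K : Type*} [Field K] [NumberField K] {ι : Type*} [Fintype ι] [DecidableEq ι]
    (b : Module.Basis ι ℤ (𝓞 K)) :
    ∃ C : ℕ, 0 < C ∧ ∀ (I : Ideal (𝓞 K)) (u : 𝓞 K) (B : ℕ), u ∈ I → u ≠ 0 →
      (∀ i, |b.repr u i| ≤ (B : ℤ)) → Ideal.absNorm I ≤ C * B ^ Fintype.card ι := by
  have hp := ClassGroup.normBound_pos AbsoluteValue.abs b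
  refine ⟨(ClassGroup.normBound AbsoluteValue.abs b).toNat, by omega, ?_⟩
  intro I u B hu h0 hB
  have h1 := ClassGroup.norm_le AbsoluteValue.abs b u (y := (B : ℤ)) hB
  have h2 := Ideal.absNorm_dvd_norm_of_mem hu
  have h3 : Algebra.norm ℤ u ≠ 0 := by simpa [Algebra.norm_eq_zero_iff] using h0
  have h4 : (Ideal.absNorm I : ℤ) ≤ |Algebra.norm ℤ u| :=
    Int.le_of_dvd (abs_pos.mpr h3) ((dvd_abs _ _).mpr h2)
  zify
  rw [Int.toNat_of_nonneg hp.le]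
  exact h4.trans h1

theorem sieveAux_count {K : Type*} [Field K] [NumberField K] {ι : Type*} [Fintype ι] [DecidableEq ι]
    (b : Module.Basis ι ℤ (𝓞 K)) (C : ℕ)
    (hC : ∀ (I : Ideal (𝓞 K)) (u : 𝓞 K) (B : ℕ), u ∈ I → u ≠ 0 →
      (∀ i, |b.repr u i| ≤ (B : ℤ)) → Ideal.absNorm I ≤ C * B ^ Fintype.card ι)
    (I : Ideal (𝓞 K)) (N L : ℕ) (hL : 0 < L)
    (hI : C * L ^ Fintype.card ι < Ideal.absNorm I)
    (s : Finset (ι → ℕ)) (hs : s ⊆ Fintype.piFinset (fun _ => Finset.range N))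
    (hd : ∀ c ∈ s, ∀ c' ∈ s, b.equivFun.symm (fun i => (c i : ℤ)) -
      b.equivFun.symm (fun i => (c' i : ℤ)) ∈ I) :
    s.card ≤ (N / L + 1) ^ Fintype.card ι := by
  have : (Fintype.piFinset (fun _ : ι => Finset.range (N / L + 1))).card =
    (N / L + 1) ^ Fintype.card ι := by simp [Fintype.card_piFinset]
  rw [← this]
  refine Finset.card_le_card_of_injOn (fun c i => c i / L) ?_ ?_
  · intro c hc
    have := hs hc
    simp only [Fintype.mem_piFinset, Finset.mem_range, Finset.mem_coe] at this ⊢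
    intro i
    exact Nat.lt_succ_of_le (Nat.div_le_div_right (this i).le)
  · intro c hc c' hc' h
    by_contra hne
    have h1 := hd c hc c' hc'
    rw [← map_sub] at h1
    refine absurd (hC I _ L h1 ?_ ?_) (not_le.mpr hI)
    · intro h0
      rw [LinearEquiv.map_eq_zero_iff] at h0
      apply hne
      funext i
      have := congrFun h0 i
      simp only [Pi.sub_apply, Pi.zero_apply] at this
      omega
    · intro i
      rw [← b.equivFun_apply, LinearEquiv.apply_symm_apply]
      have h2 : c i / L = c' i / L := congrFun h i
      simp only [Pi.sub_apply]
      have e1 := Nat.div_add_mod (c i) L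
      have e2 := Nat.div_add_mod (c' i) L
      have e3 := Nat.mod_lt (c i) hL
      have e4 := Nat.mod_lt (c' i) hL
      rw [h2] at e1
      rw [abs_le]
      constructor <;> omega

/-- real form of the count -/
theorem sieveAux_count_real {K : Type*} [Field K] [NumberField K] {ι : Type*} [Fintype ι]
    [DecidableEq ι] [Nonempty ι]
    (b : Module.Basis ι ℤ (𝓞 K)) (C : ℕ) (hC0 : 0 < C)
    (hC : ∀ (I : Ideal (𝓞 K)) (u : 𝓞 K) (B : ℕ), u ∈ I → u ≠ 0 →
      (∀ i, |b.repr u i| ≤ (B : ℤ)) → Ideal.absNorm I ≤ C * B ^ Fintype.card ι)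
    (I : Ideal (𝓞 K)) (N : ℕ)
    (hI : C < Ideal.absNorm I)
    (s : Finset (ι → ℕ)) (hs : s ⊆ Fintype.piFinset (fun _ => Finset.range N))
    (hd : ∀ c ∈ s, ∀ c' ∈ s, b.equivFun.symm (fun i => (c i : ℤ)) -
      b.equivFun.symm (fun i => (c' i : ℤ)) ∈ I) :
    (s.card : ℝ) ≤ 2 ^ Fintype.card ι *
      ((N : ℝ) ^ Fintype.card ι * (C * 2 ^ Fintype.card ι) * (1 / (Ideal.absNorm I : ℝ)) + 1) := by
  set d := Fintype.card ι with hdd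
  have hdpos : d ≠ 0 := Fintype.card_ne_zero
  set Q := Ideal.absNorm I with hQ
  have hex : ∃ n : ℕ, Q ≤ C * n ^ d := ⟨Q, by
    calc Q ≤ Q ^ d := Nat.le_self_pow hdpos Q
      _ ≤ C * Q ^ d := Nat.le_mul_of_pos_left _ hC0⟩
  obtain ⟨L, hL0, hL1, hL2⟩ : ∃ L : ℕ, 0 < L ∧ C * L ^ d < Q ∧ Q ≤ C * (L + 1) ^ d := by
    classical
    have h1 := Nat.find_spec hex
    have h2 : 2 ≤ Nat.find hex := by
      by_contra h
      have : Nat.find hex ≤ 1 := by omega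
      have h3 : (Nat.find hex) ^ d ≤ 1 := Nat.pow_le_one_iff hdpos |>.mpr this
      nlinarith
    refine ⟨Nat.find hex - 1, by omega, not_le.mp (Nat.find_min hex (by omega)), ?_⟩
    rwa [Nat.sub_add_cancel (by omega)]
  have hcard := sieveAux_count b C hC I N L hL0 hL1 s hs hd
  have hQ0 : (0 : ℝ) < Q := by
    have : 0 < Q := by omega
    exact_mod_cast this
  have hLr : (0 : ℝ) < L := by exact_mod_cast hL0
  have hQL : (Q : ℝ) ≤ C * (2 * L) ^ d := by
    have : Q ≤ C * (2 * L) ^ d := hL2.trans (by gcongr; omega)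
    exact_mod_cast this
  have hc : (s.card : ℝ) ≤ ((N : ℝ) / L + 1) ^ d := by
    calc (s.card : ℝ) ≤ (((N / L + 1) ^ d : ℕ) : ℝ) := by exact_mod_cast hcard
      _ = (((N / L : ℕ) : ℝ) + 1) ^ d := by push_cast; rfl
      _ ≤ _ := by gcongr; exact Nat.cast_div_le
  have h3 : ((N : ℝ) / L) ^ d ≤ (N : ℝ) ^ d * (C * 2 ^ d) * (1 / Q) := by
    rw [div_pow, mul_one_div, div_le_div_iff₀ (by positivity) hQ0]
    calc (N : ℝ) ^ d * Q ≤ (N : ℝ) ^ d * (C * (2 * L) ^ d) := by gcongr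
      _ = _ := by rw [mul_pow]; ring
  refine hc.trans ?_
  have h4 : ((N : ℝ) / L + 1) ^ d ≤ 2 ^ d * (((N : ℝ) / L) ^ d + 1) := by
    have hx : (0 : ℝ) ≤ (N : ℝ) / L := by positivity
    rcases le_total ((N : ℝ) / L) 1 with h | h
    · calc ((N : ℝ) / L + 1) ^ d ≤ 2 ^ d := by gcongr; linarith
        _ ≤ _ := le_mul_of_one_le_right (by positivity) (by have := pow_nonneg hx d; linarith)
    · calc ((N : ℝ) / L + 1) ^ d ≤ (2 * ((N : ℝ) / L)) ^ d := by gcongr; linarith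
        _ = 2 ^ d * ((N : ℝ) / L) ^ d := mul_pow _ _ _
        _ ≤ _ := by gcongr; linarith
  exact h4.trans (by gcongr)

theorem sieveAux_main (K : Type*) [Field K] [NumberField K] (T : Finset (𝓞 K)) :
    ∃ E : Finset (Ideal (𝓞 K)), ∀ (a : 𝓞 K) (M : ℕ), M ≠ 0 →
      (∀ P : Ideal (𝓞 K), P.IsPrime → P ≠ ⊥ → P ∈ E → (M : 𝓞 K) ∈ P) →
      ∃ z : 𝓞 K, ∀ P : Ideal (𝓞 K), P.IsPrime → P ≠ ⊥ → (M : 𝓞 K) ∉ P →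
        ∀ t ∈ T, a + M * z - t ∉ P ^ 2 := by
  classical
  let b := RingOfIntegers.basis K
  set ι := Module.Free.ChooseBasisIndex ℤ (𝓞 K)
  have : Nonempty ι := b.index_nonempty
  obtain ⟨C, hC0, hC⟩ := sieveAux_norm b
  set d := Fintype.card ι with hd
  have hd0 : d ≠ 0 := Fintype.card_ne_zero
  have hsum := summable_iff_vanishing_norm.mp (sieveAux_summable K)
  set ε₁ : ℝ := 1 / (4 * ((T.card : ℝ) * (2 ^ d * (C * 2 ^ d)) + 1)) with hε₁
  obtain ⟨s, hs⟩ := hsum ε₁ (by positivity)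
  refine ⟨s ∪ (Ideal.finite_setOfPred_absNorm_le (S := 𝓞 K) C).toFinset, ?_⟩
  intro a M hM hE
  set A : ℕ := ∑ t ∈ T, ∑ i, (b.repr (a - t) i).natAbs with hA
  set D : ℕ := C * (A + M) ^ d with hD
  set ε₂ : ℝ := 1 / (4 * ((T.card : ℝ) * 2 ^ d * D + 1)) with hε₂
  obtain ⟨s', hs'⟩ := hsum ε₂ (by positivity)
  set N : ℕ := 4 * (T.card + T.card * 2 ^ d * s'.card) + 1 with hN
  set X : ℕ := N ^ d with hX
  have hNX : N ≤ X := Nat.le_self_pow hd0 N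
  let e : (ι → ℕ) → 𝓞 K := fun c => b.equivFun.symm (fun i => (c i : ℤ))
  have he : Function.Injective e := by
    intro c c' h
    have h1 := b.equivFun.symm.injective h
    funext i
    have := congrFun h1 i
    exact_mod_cast this
  have hM0 : (M : 𝓞 K) ≠ 0 := by exact_mod_cast hM
  let Box : Finset (ι → ℕ) := Fintype.piFinset (fun _ => Finset.range N)
  have hBox : Box.card = X := by simp [Box, Fintype.card_piFinset, X, d]
  let F : Finset (Ideal (𝓞 K)) :=
    (Ideal.finite_setOfPred_absNorm_le (S := 𝓞 K) (D * X)).toFinset.filter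
      (fun P => P.IsPrime ∧ P ≠ ⊥ ∧ (M : 𝓞 K) ∉ P ∧ Ideal.absNorm P ^ 2 ≤ D * X)
  let bad : Ideal (𝓞 K) → 𝓞 K → Finset (ι → ℕ) := fun P t =>
    Box.filter (fun c => a + M * e c - t ∈ P ^ 2)
  let triv : Finset (ι → ℕ) := Box.filter (fun c => a + M * e c ∈ T)
  by_contra hcon
  push Not at hcon
  have hcover : Box ⊆ triv ∪ F.biUnion (fun P => T.biUnion (fun t => bad P t)) := by
    intro c hc
    rw [Finset.mem_union]
    by_cases hct : a + M * e c ∈ T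
    · left; exact Finset.mem_filter.mpr ⟨hc, hct⟩
    right
    obtain ⟨P, hP, hP0, hMP, t, ht, hmem⟩ := hcon (e c)
    have hne : a + M * e c - t ≠ 0 := by
      intro h; rw [sub_eq_zero] at h; exact hct (h ▸ ht)
    have hb : Ideal.absNorm (P ^ 2) ≤ C * ((A + M) * N) ^ d := by
      refine hC (P ^ 2) _ _ hmem hne ?_
      intro i
      have e1 : a + M * e c - t = (a - t) + (M : ℤ) • e c := by
        rw [zsmul_eq_mul]; push_cast; ring
      have e2 : b.repr (e c) i = c i := by
        rw [← b.equivFun_apply, LinearEquiv.apply_symm_apply]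
      rw [e1, map_add, map_smul, Finsupp.add_apply, Finsupp.smul_apply, e2]
      have h1 : (b.repr (a - t) i).natAbs ≤ A :=
        (Finset.single_le_sum (f := fun i => (b.repr (a - t) i).natAbs)
          (fun _ _ => Nat.zero_le _) (Finset.mem_univ i)).trans
        (Finset.single_le_sum (f := fun t => ∑ i, (b.repr (a - t) i).natAbs)
          (fun _ _ => Nat.zero_le _) ht)
      have h2 : c i ≤ N := (Finset.mem_range.mp (Fintype.mem_piFinset.mp hc i)).le
      have h3 : |b.repr (a - t) i| ≤ (A : ℤ) := by rw [Int.abs_eq_natAbs]; exact_mod_cast h1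
      have hN1 : 1 ≤ N := by omega
      calc |b.repr (a - t) i + (M : ℤ) • (c i : ℤ)|
          ≤ |b.repr (a - t) i| + |(M : ℤ) • (c i : ℤ)| := abs_add_le _ _
        _ ≤ A + M * c i := by
            gcongr
            rw [smul_eq_mul, abs_of_nonneg (by positivity)]
        _ ≤ A * N + M * N := by
            have : A + M * c i ≤ A * N + M * N := by
              gcongr
              exact Nat.le_mul_of_pos_right _ hN1
            exact_mod_cast this
        _ = ((A + M) * N : ℕ) := by push_cast; ring
    have hb2 : Ideal.absNorm P ^ 2 ≤ D * X := by
      rw [map_pow, mul_pow, ← mul_assoc] at hb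
      exact hb
    refine Finset.mem_biUnion.mpr ⟨P, ?_, Finset.mem_biUnion.mpr
      ⟨t, ht, Finset.mem_filter.mpr ⟨hc, hmem⟩⟩⟩
    refine Finset.mem_filter.mpr ⟨?_, hP, hP0, hMP, hb2⟩
    simp only [Set.Finite.mem_toFinset, Set.mem_ofPred_eq]
    exact (Nat.le_self_pow two_ne_zero _).trans hb2
  have hbad : ∀ P ∈ F, ∀ t ∈ T, ((bad P t).card : ℝ) ≤ 2 ^ d *
      ((X : ℝ) * (C * 2 ^ d) * (1 / (Ideal.absNorm P : ℝ) ^ 2) + 1) := by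
    intro P hPF t ht
    obtain ⟨-, hP, hP0, hMP, -⟩ := Finset.mem_filter.mp hPF
    have := hP
    have hPC : C < Ideal.absNorm P := by
      by_contra h
      exact hMP (hE P hP hP0 (Finset.mem_union_right _ (by simpa using h)))
    have := sieveAux_count_real b C hC0 hC (P ^ 2) N
      (by rw [map_pow]; exact hPC.trans_le (Nat.le_self_pow two_ne_zero _))
      (bad P t) (Finset.filter_subset _ _) ?_
    · rw [map_pow] at this
      push_cast at this
      simpa [X] using this
    · intro c hc c' hc'
      have h1 := (Finset.mem_filter.mp hc).2
      have h2 := (Finset.mem_filter.mp hc').2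
      have h3 : (M : 𝓞 K) * (e c - e c') ∈ P ^ 2 := by
        have := (P ^ 2).sub_mem h1 h2
        convert this using 1; ring
      exact (Ideal.IsPrime.mul_mem_pow P h3).resolve_left hMP
  have htriv : triv.card ≤ T.card := by
    refine Finset.card_le_card_of_injOn (fun c => a + M * e c)
      (fun c hc => (Finset.mem_filter.mp hc).2) ?_
    intro c _ c' _ h
    exact he (mul_left_cancel₀ hM0 (add_left_cancel h))
  have hX0 : (0 : ℝ) < X := by
    have : 0 < X := by omega
    exact_mod_cast this
  have hF1 : ∑ P ∈ F, 1 / (Ideal.absNorm P : ℝ) ^ 2 ≤ ε₁ := by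
    refine (le_abs_self _).trans (hs F ?_).le
    rw [Finset.disjoint_left]
    intro P hPF hPs
    obtain ⟨-, hP, hP0, hMP, -⟩ := Finset.mem_filter.mp hPF
    exact hMP (hE P hP hP0 (Finset.mem_union_left _ hPs))
  have hF2 : (F.card : ℝ) ≤ s'.card + D * X * ε₂ := by
    have h1 : (F.card : ℝ) ≤ s'.card + (F \ s').card := by
      have : F.card ≤ s'.card + (F \ s').card := by
        have := Finset.card_le_card (Finset.subset_union_right (s₁ := s') (s₂ := F))
        rw [← Finset.union_sdiff_self_eq_union] at this
        exact this.trans (Finset.card_union_le _ _)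
      exact_mod_cast this
    have h2 : ((F \ s').card : ℝ) ≤ D * X * ∑ P ∈ F \ s', 1 / (Ideal.absNorm P : ℝ) ^ 2 := by
      rw [Finset.mul_sum, Finset.card_eq_sum_ones]
      push_cast
      refine Finset.sum_le_sum fun P hP => ?_
      obtain ⟨-, -, hP0, -, hle⟩ := Finset.mem_filter.mp (Finset.mem_sdiff.mp hP).1
      have hpos : 0 < Ideal.absNorm P :=
        Nat.pos_of_ne_zero (fun h => hP0 (Ideal.absNorm_eq_zero_iff.mp h))
      have hpos' : (0 : ℝ) < (Ideal.absNorm P : ℝ) ^ 2 := by positivity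
      rw [mul_one_div, le_div_iff₀ hpos', one_mul]
      exact_mod_cast hle
    have h3 : ∑ P ∈ F \ s', 1 / (Ideal.absNorm P : ℝ) ^ 2 ≤ ε₂ :=
      (le_abs_self _).trans (hs' _ Finset.sdiff_disjoint).le
    have h4 : (D : ℝ) * X * ∑ P ∈ F \ s', 1 / (Ideal.absNorm P : ℝ) ^ 2 ≤ D * X * ε₂ := by
      gcongr
    linarith
  have hcount : (X : ℝ) ≤ T.card + ∑ P ∈ F, T.card * (2 ^ d *
      ((X : ℝ) * (C * 2 ^ d) * (1 / (Ideal.absNorm P : ℝ) ^ 2) + 1)) := by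
    have h1 : Box.card ≤ T.card + ∑ P ∈ F, ∑ t ∈ T, (bad P t).card := by
      refine (Finset.card_le_card hcover).trans ((Finset.card_union_le _ _).trans ?_)
      refine add_le_add htriv (Finset.card_biUnion_le.trans (Finset.sum_le_sum fun P _ => ?_))
      exact Finset.card_biUnion_le
    rw [hBox] at h1
    have h2 : (X : ℝ) ≤ T.card + ∑ P ∈ F, ∑ t ∈ T, ((bad P t).card : ℝ) := by exact_mod_cast h1
    refine h2.trans (add_le_add le_rfl (Finset.sum_le_sum fun P hP => ?_))
    refine (Finset.sum_le_sum (hbad P hP)).trans ?_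
    rw [Finset.sum_const, nsmul_eq_mul]
  have hsplit : ∑ P ∈ F, (T.card : ℝ) * (2 ^ d *
      ((X : ℝ) * (C * 2 ^ d) * (1 / (Ideal.absNorm P : ℝ) ^ 2) + 1)) =
      (X : ℝ) * (T.card * (2 ^ d * (C * 2 ^ d))) * (∑ P ∈ F, 1 / (Ideal.absNorm P : ℝ) ^ 2) +
      (T.card : ℝ) * 2 ^ d * F.card := by
    have hF : (F.card : ℝ) = ∑ P ∈ F, (1 : ℝ) := by simp
    rw [hF, Finset.mul_sum, Finset.mul_sum, ← Finset.sum_add_distrib]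
    exact Finset.sum_congr rfl fun P _ => by ring
  rw [hsplit] at hcount
  have hq : ∀ u : ℝ, 0 ≤ u → u * (1 / (4 * (u + 1))) ≤ 1 / 4 := by
    intro u hu
    rw [mul_one_div, div_le_div_iff₀ (by positivity) (by norm_num)]
    linarith
  have g1 : (X : ℝ) * (T.card * (2 ^ d * (C * 2 ^ d))) *
      ∑ P ∈ F, 1 / (Ideal.absNorm P : ℝ) ^ 2 ≤ X * (1 / 4) := by
    rw [mul_assoc]
    refine mul_le_mul_of_nonneg_left ?_ hX0.le
    exact (mul_le_mul_of_nonneg_left hF1 (by positivity)).trans (hq _ (by positivity))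
  have g2 : (T.card : ℝ) * 2 ^ d * F.card ≤ T.card * 2 ^ d * s'.card + X * (1 / 4) := by
    calc (T.card : ℝ) * 2 ^ d * F.card ≤ T.card * 2 ^ d * (s'.card + D * X * ε₂) := by gcongr
      _ = T.card * 2 ^ d * s'.card + X * ((T.card * 2 ^ d * D) * ε₂) := by ring
      _ ≤ _ := by
        gcongr
        exact hq _ (by positivity)
  have g3 : (4 : ℝ) * (T.card + T.card * 2 ^ d * s'.card) + 1 ≤ X := by
    have : 4 * (T.card + T.card * 2 ^ d * s'.card) + 1 ≤ X := hNX
    exact_mod_cast this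
  linarith

end Helpers

/-- Strong approximation for sieves: if all excluded residue classes are concentrated
near a fixed finite set `T` modulo squares of primes, and no sieve set is everything,
then every finite system of admissible congruence conditions is realized by an element
of `V(K,R)`. -/
theorem sieve_strong_approximation {K : Type*} [Field K] [NumberField K]
    (S : ResidueSieve K) (T : Finset (𝓞 K))
    (hT : ∀ P : Ideal (𝓞 K), P.IsPrime → P ≠ ⊥ →
      ∀ x : 𝓞 K, S.Mem P x → ∃ t ∈ T, x - t ∈ P ^ 2)
    (hne : ∀ P : Ideal (𝓞 K), P.IsPrime → P ≠ ⊥ → S.R P ≠ Set.univ) :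
    ∀ Ω : Finset (Ideal (𝓞 K)), (∀ P ∈ Ω, P.IsPrime ∧ P ≠ ⊥) →
      ∀ m : ℕ, ∀ x : Ideal (𝓞 K) → 𝓞 K, (∀ P ∈ Ω, ¬ S.Mem P (x P)) →
        ∃ y ∈ S.V, ∀ P ∈ Ω, y - x P ∈ P ^ m := by
  classical
  intro Ω hΩ m x hx
  obtain ⟨E, hE⟩ := sieveAux_main K T
  set G : Finset (Ideal (𝓞 K)) := (E ∪ Ω).filter (fun P => P ≠ ⊥) with hG
  set m₀ : ℕ := ∏ P ∈ G, Ideal.absNorm P with hm₀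
  have hm₀0 : m₀ ≠ 0 := Finset.prod_ne_zero_iff.mpr fun P hP h =>
    (Finset.mem_filter.mp hP).2 (Ideal.absNorm_eq_zero_iff.mp h)
  have hm₀K : (m₀ : 𝓞 K) ≠ 0 := by exact_mod_cast hm₀0
  have hGm : ∀ P ∈ G, (m₀ : 𝓞 K) ∈ P := by
    intro P hP
    obtain ⟨q, hq⟩ := Finset.dvd_prod_of_mem Ideal.absNorm hP
    rw [hm₀, hq]
    push_cast
    exact P.mul_mem_right _ (Ideal.absNorm_mem P)
  have hfin : {P : Ideal (𝓞 K) | (m₀ : 𝓞 K) ∈ P}.Finite := by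
    refine (Ideal.finite_setOfPred_absNorm_le (S := 𝓞 K)
      (Ideal.absNorm (Ideal.span {(m₀ : 𝓞 K)}))).subset ?_
    intro P hP
    refine Nat.le_of_dvd (Nat.pos_of_ne_zero ?_)
      (Ideal.absNorm_dvd_absNorm_of_le ((Ideal.span_singleton_le_iff_mem _).mpr hP))
    intro h
    rw [Ideal.absNorm_eq_zero_iff, Ideal.span_singleton_eq_bot] at h
    exact hm₀K h
  set E' : Finset (Ideal (𝓞 K)) := hfin.toFinset.filter (fun P => P.IsPrime ∧ P ≠ ⊥) with hE'
  have memE' : ∀ P : Ideal (𝓞 K), P ∈ E' ↔ (m₀ : 𝓞 K) ∈ P ∧ P.IsPrime ∧ P ≠ ⊥ := by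
    intro P; simp [hE']
  have hx' : ∀ P : Ideal (𝓞 K), ∃ w : 𝓞 K, (P ∈ Ω → w = x P) ∧
      (P.IsPrime → P ≠ ⊥ → ¬ S.Mem P w) := by
    intro P
    by_cases hPΩ : P ∈ Ω
    · exact ⟨x P, fun _ => rfl, fun _ _ => hx P hPΩ⟩
    · by_cases hP : P.IsPrime ∧ P ≠ ⊥
      · obtain ⟨r, hr⟩ := (Set.ne_univ_iff_exists_notMem _).mp (hne P hP.1 hP.2)
        obtain ⟨w, rfl⟩ := Ideal.Quotient.mk_surjective r
        exact ⟨w, fun h => absurd h hPΩ, fun _ _ => hr⟩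
      · exact ⟨0, fun h => absurd h hPΩ, fun h1 h2 => absurd ⟨h1, h2⟩ hP⟩
  choose w hw1 hw2 using hx'
  set k : ℕ := m + ∑ P ∈ E', S.k P + 1 with hk
  obtain ⟨a, ha⟩ := IsDedekindDomain.exists_forall_sub_mem_ideal (s := E')
    (fun P : Ideal (𝓞 K) => P) (fun _ => k)
    (fun P hP => by
      have := (memE' P).mp hP
      exact Ideal.prime_of_isPrime this.2.2 this.2.1)
    (fun P _ Q _ h => h) (fun P => w P.1)
  have hMmem : ∀ P : Ideal (𝓞 K), (m₀ : 𝓞 K) ∈ P → ((m₀ ^ k : ℕ) : 𝓞 K) ∈ P ^ k := by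
    intro P hP
    push_cast
    exact Ideal.pow_mem_pow hP k
  obtain ⟨z, hz⟩ := hE a (m₀ ^ k) (pow_ne_zero _ hm₀0) (by
    intro P hP hP0 hPE
    exact Ideal.pow_le_self (by omega) (hMmem P (hGm P
      (Finset.mem_filter.mpr ⟨Finset.mem_union_left _ hPE, hP0⟩))))
  have hcong : ∀ P ∈ E', a + ((m₀ ^ k : ℕ) : 𝓞 K) * z - w P ∈ P ^ k := by
    intro P hP
    have h1 := (P ^ k).add_mem (ha P hP)
      ((P ^ k).mul_mem_right z (hMmem P ((memE' P).mp hP).1))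
    convert h1 using 1; ring
  refine ⟨a + ((m₀ ^ k : ℕ) : 𝓞 K) * z, ?_, ?_⟩
  · intro P hP hP0 hmem
    by_cases hPm : (m₀ : 𝓞 K) ∈ P
    · have hPE : P ∈ E' := (memE' P).mpr ⟨hPm, hP, hP0⟩
      have hle : S.k P ≤ k := by
        have := Finset.single_le_sum (f := S.k) (fun _ _ => Nat.zero_le _) hPE
        omega
      have h1 := Ideal.pow_le_pow_right hle (hcong P hPE)
      refine hw2 P hP hP0 ?_
      unfold ResidueSieve.Mem at hmem ⊢
      rwa [← Ideal.Quotient.eq.mpr h1]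
    · obtain ⟨t, ht, h1⟩ := hT P hP hP0 _ hmem
      refine hz P hP hP0 ?_ t ht h1
      intro h
      push_cast at h
      exact hPm (hP.mem_of_pow_mem _ h)
  · intro P hP
    have hPE : P ∈ E' := (memE' P).mpr ⟨hGm P (Finset.mem_filter.mpr
      ⟨Finset.mem_union_right _ hP, (hΩ P hP).2⟩), hΩ P hP⟩
    rw [← hw1 P hP]
    exact Ideal.pow_le_pow_right (by omega) (hcong P hPE)
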